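/- Let (X, p, θ) be a partial extended b-metric space, let T : X → X satisfy p(Tx, Ty) ≤ k·p(x,y) for all x,y ∈ X with k ∈ [0,1), let x₀ ∈ X and set xₙ = Tⁿx₀. If there is c with k·c < 1 such that θ(xₙ, xₘ) ≤ c for all sufficiently large n, m, then (xₙ) is a 0-Cauchy sequence, i.e. lim_{n,m→∞} p(xₙ, xₘ) = 0. -/

import Mathlib

open Filter Topology

/-- Iterating a contraction `i` times contracts by `k ^ i`. -/
theorem iterate_contraction_le {X : Type*} {p : X → X → ℝ} {T : X → X} {k : ℝ} (hk0 : 0 ≤ k)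
    (hT : ∀ x y, p (T x) (T y) ≤ k * p x y) (i : ℕ) (x y : X) :
    p (T^[i] x) (T^[i] y) ≤ k ^ i * p x y := by
  induction i with
  | zero => simp
  | succ i ih =>
    rw [Function.iterate_succ_apply', Function.iterate_succ_apply', pow_succ', mul_assoc]
    exact (hT _ _).trans (mul_le_mul_of_nonneg_left ih hk0)

/-- If `θ y (T^[j] y) ≤ c` along the orbit of `y` and `k * c < 1`, then the orbit stays within
`c * p y (T y) / (1 - k * c)` of `y`. -/
theorem orbit_le_of_contraction {X : Type*} {p θ : X → X → ℝ}
    (hp_nonneg : ∀ x y, 0 ≤ p x y) (hP2 : ∀ x y, p x x ≤ p x y)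
    (hP4 : ∀ x y z, p x z ≤ θ x z * (p x y + p y z) - p y y)
    {T : X → X} {k c : ℝ} (hk0 : 0 ≤ k) (hc : 1 ≤ c) (hkc : k * c < 1)
    (hT : ∀ x y, p (T x) (T y) ≤ k * p x y) (y : X) (hθ : ∀ j, θ y (T^[j] y) ≤ c) (j : ℕ) :
    p y (T^[j] y) ≤ c * p y (T y) / (1 - k * c) := by
  have hpos : 0 < 1 - k * c := sub_pos.2 hkc
  have hd := hp_nonneg y (T y)
  induction j with
  | zero =>
    rw [le_div_iff₀ hpos]
    have h := hP2 y (T y)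
    have h0 := hp_nonneg y y
    have hkc0 : 0 ≤ k * c := mul_nonneg hk0 (zero_le_one.trans hc)
    simp only [Function.iterate_zero, id]
    nlinarith
  | succ j ih =>
    set B := c * p y (T y) / (1 - k * c) with hB
    have hBeq : B * (1 - k * c) = c * p y (T y) := div_mul_cancel₀ _ hpos.ne'
    have hstep : p (T y) (T^[j + 1] y) ≤ k * B := by
      rw [Function.iterate_succ_apply']
      exact (hT _ _).trans (mul_le_mul_of_nonneg_left ih hk0)
    calc p y (T^[j + 1] y)
        ≤ θ y (T^[j + 1] y) * (p y (T y) + p (T y) (T^[j + 1] y)) :=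
          (hP4 _ (T y) _).trans (sub_le_self _ (hp_nonneg _ _))
      _ ≤ c * (p y (T y) + p (T y) (T^[j + 1] y)) :=
          mul_le_mul_of_nonneg_right (hθ _) (add_nonneg hd (hp_nonneg _ _))
      _ ≤ c * (p y (T y) + k * B) := by gcongr
      _ = B := by linear_combination -hBeq

/-- In a partial extended b-metric space, the Picard orbit of a
contraction `T` (with the control-function condition) is a 0-Cauchy sequence. -/
theorem pebms_contraction_orbit_zero_cauchy
    {X : Type*}
    (p : X → X → ℝ) (θ : X → X → ℝ)
    (hθ : ∀ x y, 1 ≤ θ x y)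
    (hp_nonneg : ∀ x y, 0 ≤ p x y)
    (hP1 : ∀ x y, (p x x = p x y ∧ p x y = p y y) ↔ x = y)
    (hP2 : ∀ x y, p x x ≤ p x y)
    (hP3 : ∀ x y, p x y = p y x)
    (hP4 : ∀ x y z, p x z ≤ θ x z * (p x y + p y z) - p y y)
    (T : X → X) (k : ℝ) (hk0 : 0 ≤ k) (hk1 : k < 1)
    (hT : ∀ x y, p (T x) (T y) ≤ k * p x y)
    (x₀ : X)
    (hθlim : ∃ c : ℝ, k * c < 1 ∧
      ∃ N : ℕ, ∀ n ≥ N, ∀ m ≥ N, θ (T^[n] x₀) (T^[m] x₀) ≤ c) :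
    Tendsto (fun nm : ℕ × ℕ => p (T^[nm.1] x₀) (T^[nm.2] x₀)) atTop (𝓝 0) := by
  obtain ⟨c, hkc, N, hN⟩ := hθlim
  have hc : 1 ≤ c := (hθ _ _).trans (hN N le_rfl N le_rfl)
  have hc0 : 0 ≤ c := zero_le_one.trans hc
  obtain ⟨B, hB⟩ : ∃ B, ∀ n ≥ N, p (T^[N] x₀) (T^[n] x₀) ≤ B := by
    refine ⟨c * p (T^[N] x₀) (T (T^[N] x₀)) / (1 - k * c), fun n hn => ?_⟩
    have h := orbit_le_of_contraction hp_nonneg hP2 hP4 hk0 hc hkc hT (T^[N] x₀)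
      (fun j => by
        rw [← Function.iterate_add_apply]
        exact hN N le_rfl _ (Nat.le_add_left _ _)) (n - N)
    rwa [← Function.iterate_add_apply, Nat.sub_add_cancel hn] at h
  have hbound : ∀ n ≥ N, ∀ m ≥ N, p (T^[n] x₀) (T^[m] x₀) ≤ c * (B + B) := fun n hn m hm =>
    calc p (T^[n] x₀) (T^[m] x₀)
        ≤ θ (T^[n] x₀) (T^[m] x₀) * (p (T^[n] x₀) (T^[N] x₀) + p (T^[N] x₀) (T^[m] x₀)) :=
          (hP4 _ _ _).trans (sub_le_self _ (hp_nonneg _ _))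
      _ ≤ c * (p (T^[n] x₀) (T^[N] x₀) + p (T^[N] x₀) (T^[m] x₀)) :=
          mul_le_mul_of_nonneg_right (hN n hn m hm) (add_nonneg (hp_nonneg _ _) (hp_nonneg _ _))
      _ ≤ c * (B + B) :=
          mul_le_mul_of_nonneg_left (add_le_add (hP3 _ _ ▸ hB n hn) (hB m hm)) hc0
  have hlim : Tendsto (fun i : ℕ => k ^ i * (c * (B + B))) atTop (𝓝 0) := by
    simpa using (tendsto_pow_atTop_nhds_zero_of_lt_one hk0 hk1).mul_const (c * (B + B))
  refine tendsto_order.2 ⟨fun a ha => .of_forall fun nm => ha.trans_le (hp_nonneg _ _),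
    fun ε hε => ?_⟩
  obtain ⟨i, hi⟩ := (hlim.eventually_lt_const hε).exists
  filter_upwards [eventually_ge_atTop (i + N, i + N)] with ⟨n, m⟩ hnm
  obtain ⟨a, rfl⟩ := Nat.exists_eq_add_of_le hnm.1
  obtain ⟨b, rfl⟩ := Nat.exists_eq_add_of_le hnm.2
  simp only [add_assoc i N, Function.iterate_add_apply T i]
  exact ((iterate_contraction_le hk0 hT i _ _).trans (mul_le_mul_of_nonneg_left
    (hbound _ (Nat.le_add_right _ _) _ (Nat.le_add_right _ _)) (pow_nonneg hk0 i))).trans_lt hi
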